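/- arXiv:2007.10664 — 2 statements merged into one kernel-verified Lean document; each statement's English description precedes it below -/
import Mathlib

section
/- Assume there exists j ∈ ι with Mⱼ ≠ M. Then the Friedrichs cosine admits the alternative expressions c_ω = sSup { ‖∑ᵢ ω i • xᵢ‖ : x : ι → H with xᵢ ∈ Mᵢ ∩ M^⊥ for all i and ∑ᵢ ω i ‖xᵢ‖² = 1 } and c_ω = sSup { ‖∑ᵢ ω i • xᵢ‖ / √(∑ᵢ ω i ‖xᵢ‖²) : x : ι → H with xᵢ ∈ Mᵢ ∩ M^⊥ for all i and 0 < ∑ᵢ ω i ‖xᵢ‖² < ∞ }. -/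
open RealInnerProductSpace

/-- The cosine of the Friedrichs angle between the product subspace `∏ᵢ Mᵢ` and the
diagonal in the `ω`-weighted `ℓ²` product space, expressed intrinsically in `H`. -/
noncomputable def friedrichsCos {H : Type*} [NormedAddCommGroup H] [InnerProductSpace ℝ H]
    {ι : Type*} (ω : ι → ℝ) (M : ι → Submodule ℝ H) : ℝ :=
  sSup { r : ℝ | ∃ (x : ι → H) (y : H),
    (∀ i, x i ∈ M i ⊓ (⨅ j, M j)ᗮ) ∧
    (Summable fun i => ω i * ‖x i‖ ^ 2) ∧ (∑' i, ω i * ‖x i‖ ^ 2) ≤ 1 ∧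
    y ∈ (⨅ j, M j)ᗮ ∧ ‖y‖ ≤ 1 ∧
    r = ∑' i, ω i * ⟪x i, y⟫ }

/-!
The map `x ↦ ∑ᵢ ωᵢ xᵢ` sends square-summable families in `∏ᵢ (Mᵢ ⊓ M^⊥)` to `M^⊥`. Pairing its
values with the unit ball of `M^⊥` recovers their norm, with `v / ‖v‖` as extremal vector, so the
Friedrichs cosine is the supremum of `‖∑ᵢ ωᵢ xᵢ‖` over the weighted unit ball. By homogeneity the
unit sphere, nonempty as soon as some `Mⱼ ⊓ M^⊥` is nonzero, gives the same supremum, and so do the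
quotients by the weighted norm. In each comparison the two sets of reals are mutually cofinal, which
gives equality of their suprema directly.
-/

theorem completeSpace_iInf_submodule {R E ι : Type*} [Semiring R] [NormedAddCommGroup E]
    [Module R E] [CompleteSpace E] (M : ι → Submodule R E) [∀ i, CompleteSpace (M i)] :
    CompleteSpace (⨅ i, M i : Submodule R E) := by
  have isClosed_iInf : IsClosed ((⨅ i, M i : Submodule R E) : Set E) := by
    rw [Submodule.coe_iInf]
    exact isClosed_iInter fun i =>
      (completeSpace_coe_iff_isComplete.mp (inferInstanceAs (CompleteSpace (M i)))).isClosed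
  exact isClosed_iInf.completeSpace_coe

theorem inf_orthogonal_ne_bot_of_lt {𝕜 E : Type*} [RCLike 𝕜] [NormedAddCommGroup E]
    [InnerProductSpace 𝕜 E] {K L : Submodule 𝕜 E} [K.HasOrthogonalProjection] (hKL : K < L) :
    L ⊓ Kᗮ ≠ ⊥ := fun inf_eq_bot => hKL.ne <| by
  simpa only [inf_comm Kᗮ, inf_eq_bot, sup_bot_eq] using
    Submodule.sup_orthogonal_inf_of_hasOrthogonalProjection hKL.le

theorem hasSum_mul_norm_sq_single {E ι : Type*} [SeminormedAddCommGroup E] [DecidableEq ι]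
    (ω : ι → ℝ) (j : ι) (u : E) :
    HasSum (fun i => ω i * ‖(Pi.single j u : ι → E) i‖ ^ 2) (ω j * ‖u‖ ^ 2) := by
  convert hasSum_single j fun i hij => ?_ using 1
  · rw [Pi.single_eq_same]
  · simp [Pi.single_eq_of_ne hij]

section WeightedSums

variable {E : Type*} [NormedAddCommGroup E] [NormedSpace ℝ E] {ι : Type*} {ω : ι → ℝ} {x : ι → E}

theorem summable_smul_of_summable_mul_norm_sq [CompleteSpace E] (hω : ∀ i, 0 ≤ ω i)
    (hωsum : Summable ω) (hx : Summable fun i => ω i * ‖x i‖ ^ 2) :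
    Summable fun i => ω i • x i := by
  refine Summable.of_norm_bounded (hωsum.add hx) fun i => ?_
  have norm_le : ‖x i‖ ≤ 1 + ‖x i‖ ^ 2 := by nlinarith [sq_nonneg (‖x i‖ - 1)]
  calc ‖ω i • x i‖ = ω i * ‖x i‖ := by rw [norm_smul, Real.norm_of_nonneg (hω i)]
    _ ≤ ω i * (1 + ‖x i‖ ^ 2) := mul_le_mul_of_nonneg_left norm_le (hω i)
    _ = ω i + ω i * ‖x i‖ ^ 2 := by ring

theorem tsum_smul_eq_zero_of_tsum_mul_norm_sq_eq_zero (hω : ∀ i, 0 ≤ ω i)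
    (hx : Summable fun i => ω i * ‖x i‖ ^ 2) (hx0 : ∑' i, ω i * ‖x i‖ ^ 2 = 0) :
    ∑' i, ω i • x i = 0 := by
  have terms_eq_zero : (fun i => ω i * ‖x i‖ ^ 2) = 0 :=
    (hasSum_zero_iff_of_nonneg fun i => mul_nonneg (hω i) (sq_nonneg _)).mp (hx0 ▸ hx.hasSum)
  have term_smul_eq_zero (i : ι) : ω i • x i = 0 := by
    simpa using congrFun terms_eq_zero i
  simp only [term_smul_eq_zero, tsum_zero]

theorem hasSum_mul_norm_sq_const_smul (hx : Summable fun i => ω i * ‖x i‖ ^ 2) (c : ℝ) :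
    HasSum (fun i => ω i * ‖c • x i‖ ^ 2) (c ^ 2 * ∑' i, ω i * ‖x i‖ ^ 2) := by
  simpa only [norm_smul, mul_pow, Real.norm_eq_abs, sq_abs, mul_left_comm] using
    hx.hasSum.mul_left (c ^ 2)

theorem norm_tsum_smul_const_smul (ω : ι → ℝ) (x : ι → E) (c : ℝ) :
    ‖∑' i, ω i • c • x i‖ = |c| * ‖∑' i, ω i • x i‖ := by
  simp only [smul_comm _ c, tsum_const_smul'', norm_smul, Real.norm_eq_abs]

end WeightedSums

section SumNorms

variable {E : Type*} [NormedAddCommGroup E] [NormedSpace ℝ E] {ι : Type*}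

/-- The norms `‖∑ᵢ ωᵢ xᵢ‖` of the weighted sums of families `x ∈ ∏ᵢ Kᵢ` in the unit ball of the
`ω`-weighted `ℓ²` product. Summability is required separately since `∑'` is `0` otherwise. -/
def sumNormsOnBall (ω : ι → ℝ) (K : ι → Submodule ℝ E) : Set ℝ :=
  { r | ∃ x : ι → E, (∀ i, x i ∈ K i) ∧ (Summable fun i => ω i * ‖x i‖ ^ 2) ∧
    ∑' i, ω i * ‖x i‖ ^ 2 ≤ 1 ∧ r = ‖∑' i, ω i • x i‖ }

/-- The norms `‖∑ᵢ ωᵢ xᵢ‖` of the weighted sums of families `x ∈ ∏ᵢ Kᵢ` in the unit sphere of the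
`ω`-weighted `ℓ²` product. -/
def sumNormsOnSphere (ω : ι → ℝ) (K : ι → Submodule ℝ E) : Set ℝ :=
  { r | ∃ x : ι → E, (∀ i, x i ∈ K i) ∧ (Summable fun i => ω i * ‖x i‖ ^ 2) ∧
    ∑' i, ω i * ‖x i‖ ^ 2 = 1 ∧ r = ‖∑' i, ω i • x i‖ }

/-- The quotients of `‖∑ᵢ ωᵢ xᵢ‖` by the `ω`-weighted `ℓ²` norm of `x`, for the families
`x ∈ ∏ᵢ Kᵢ` whose weighted norm is finite and positive. -/
def sumNormQuotients (ω : ι → ℝ) (K : ι → Submodule ℝ E) : Set ℝ :=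
  { r | ∃ x : ι → E, (∀ i, x i ∈ K i) ∧ (Summable fun i => ω i * ‖x i‖ ^ 2) ∧
    0 < ∑' i, ω i * ‖x i‖ ^ 2 ∧
    r = ‖∑' i, ω i • x i‖ / Real.sqrt (∑' i, ω i * ‖x i‖ ^ 2) }

theorem sumNormsOnSphere_eq_sumNormQuotients (ω : ι → ℝ) (K : ι → Submodule ℝ E) :
    sumNormsOnSphere ω K = sumNormQuotients ω K := by
  ext r
  constructor
  · rintro ⟨x, hxK, hx, hx1, rfl⟩
    exact ⟨x, hxK, hx, hx1 ▸ one_pos, by rw [hx1, Real.sqrt_one, div_one]⟩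
  · rintro ⟨x, hxK, hx, hx_pos, rfl⟩
    set s := ∑' i, ω i * ‖x i‖ ^ 2
    have hasSum_normalized := hasSum_mul_norm_sq_const_smul hx (√s)⁻¹
    refine ⟨fun i => (√s)⁻¹ • x i, fun i => (K i).smul_mem _ (hxK i),
      hasSum_normalized.summable, ?_, ?_⟩
    · rw [hasSum_normalized.tsum_eq, inv_pow, Real.sq_sqrt hx_pos.le, inv_mul_cancel₀ hx_pos.ne']
    · rw [norm_tsum_smul_const_smul, abs_of_nonneg (by positivity), div_eq_inv_mul]

theorem sumNormsOnSphere_nonempty {ω : ι → ℝ} {K : ι → Submodule ℝ E}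
    (hK : ∃ j, 0 < ω j ∧ K j ≠ ⊥) : (sumNormsOnSphere ω K).Nonempty := by
  classical
  obtain ⟨j, hωj, hKj⟩ := hK
  obtain ⟨u, huK, hu0⟩ := (K j).ne_bot_iff.mp hKj
  have single_mem (i : ι) : (Pi.single j u : ι → E) i ∈ K i := by
    rcases eq_or_ne i j with rfl | hij
    · rwa [Pi.single_eq_same]
    · rw [Pi.single_eq_of_ne hij]
      exact (K i).zero_mem
  have hasSum_u := hasSum_mul_norm_sq_single ω j u
  rw [sumNormsOnSphere_eq_sumNormQuotients]
  exact ⟨_, Pi.single j u, single_mem, hasSum_u.summable,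
    hasSum_u.tsum_eq ▸ mul_pos hωj (pow_pos (norm_pos_iff.mpr hu0) 2), rfl⟩

theorem sSup_sumNormsOnBall_eq_sSup_sumNormsOnSphere {ω : ι → ℝ} (hω : ∀ i, 0 ≤ ω i)
    {K : ι → Submodule ℝ E} (hne : (sumNormsOnSphere ω K).Nonempty) :
    sSup (sumNormsOnBall ω K) = sSup (sumNormsOnSphere ω K) := by
  refine csSup_eq_csSup_of_forall_exists_le ?_ ?_
  · rintro _ ⟨x, hxK, hx, hx1, rfl⟩
    rcases (tsum_nonneg fun i => mul_nonneg (hω i) (sq_nonneg ‖x i‖)).eq_or_lt with hx0 | hx_pos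
    · obtain ⟨_, z, hzK, hz, hz1, rfl⟩ := hne
      refine ⟨_, ⟨z, hzK, hz, hz1, rfl⟩, ?_⟩
      rw [tsum_smul_eq_zero_of_tsum_mul_norm_sq_eq_zero hω hx hx0.symm, norm_zero]
      exact norm_nonneg _
    · rw [sumNormsOnSphere_eq_sumNormQuotients]
      exact ⟨_, ⟨x, hxK, hx, hx_pos, rfl⟩,
        le_div_self (norm_nonneg _) (Real.sqrt_pos.mpr hx_pos) (Real.sqrt_le_one.mpr hx1)⟩
  · rintro _ ⟨x, hxK, hx, hx1, rfl⟩
    exact ⟨_, ⟨x, hxK, hx, hx1.le, rfl⟩, le_rfl⟩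

end SumNorms

section FriedrichsCos

variable {H : Type*} [NormedAddCommGroup H] [InnerProductSpace ℝ H] {ι : Type*} {ω : ι → ℝ}

theorem exists_mem_norm_le_one_inner_eq_norm {L : Submodule ℝ H} {v : H} (hv : v ∈ L) :
    ∃ y ∈ L, ‖y‖ ≤ 1 ∧ ⟪v, y⟫ = ‖v‖ := by
  refine ⟨‖v‖⁻¹ • v, L.smul_mem _ hv, ?_, ?_⟩
  · rw [norm_smul, norm_inv, norm_norm]
    exact inv_mul_le_one
  · rw [inner_smul_right, real_inner_self_eq_norm_mul_norm, ← mul_assoc, inv_mul_mul_self]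

theorem tsum_mul_inner_eq_inner_tsum_smul {x : ι → H} (hx : Summable fun i => ω i • x i) (y : H) :
    ∑' i, ω i * ⟪x i, y⟫ = ⟪∑' i, ω i • x i, y⟫ := by
  simpa only [innerSL_apply_apply, inner_smul_right, real_inner_comm] using
    ((innerSL ℝ y).map_tsum hx).symm

theorem friedrichsCos_eq_sSup_sumNormsOnBall [CompleteSpace H] (hω : ∀ i, 0 ≤ ω i)
    (hωsum : Summable ω) (M : ι → Submodule ℝ H) :
    friedrichsCos ω M = sSup (sumNormsOnBall ω fun i => M i ⊓ (⨅ j, M j)ᗮ) := by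
  refine csSup_eq_csSup_of_forall_exists_le ?_ ?_
  · rintro _ ⟨x, y, hxM, hx, hx1, -, hy1, rfl⟩
    refine ⟨_, ⟨x, hxM, hx, hx1, rfl⟩, ?_⟩
    rw [tsum_mul_inner_eq_inner_tsum_smul (summable_smul_of_summable_mul_norm_sq hω hωsum hx)]
    exact (real_inner_le_norm _ _).trans (mul_le_of_le_one_right (norm_nonneg _) hy1)
  · rintro _ ⟨x, hxM, hx, hx1, rfl⟩
    have sum_mem : ∑' i, ω i • x i ∈ (⨅ j, M j)ᗮ :=
      tsum_mem (Submodule.isClosed_orthogonal _) fun i => Submodule.smul_mem _ _ (hxM i).2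
    obtain ⟨y, hyM, hy1, inner_eq_norm⟩ := exists_mem_norm_le_one_inner_eq_norm sum_mem
    refine ⟨_, ⟨x, y, hxM, hx, hx1, hyM, hy1, rfl⟩, ?_⟩
    rw [tsum_mul_inner_eq_inner_tsum_smul (summable_smul_of_summable_mul_norm_sq hω hωsum hx),
      inner_eq_norm]

end FriedrichsCos

theorem stmt_7_general {H : Type*} [NormedAddCommGroup H] [InnerProductSpace ℝ H]
    [CompleteSpace H] {ι : Type*} (ω : ι → ℝ) (hω : ∀ i, 0 ≤ ω i) (hωsum : Summable ω)
    (M : ι → Submodule ℝ H) (hj : ∃ j, 0 < ω j ∧ M j ⊓ (⨅ i, M i)ᗮ ≠ ⊥) :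
    friedrichsCos ω M =
      sSup { r : ℝ | ∃ x : ι → H,
        (∀ i, x i ∈ M i ⊓ (⨅ j, M j : Submodule ℝ H)ᗮ) ∧
        (Summable fun i => ω i * ‖x i‖ ^ 2) ∧ (∑' i, ω i * ‖x i‖ ^ 2) = 1 ∧
        r = ‖∑' i, ω i • x i‖ } ∧
    friedrichsCos ω M =
      sSup { r : ℝ | ∃ x : ι → H,
        (∀ i, x i ∈ M i ⊓ (⨅ j, M j : Submodule ℝ H)ᗮ) ∧
        (Summable fun i => ω i * ‖x i‖ ^ 2) ∧ 0 < (∑' i, ω i * ‖x i‖ ^ 2) ∧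
        r = ‖∑' i, ω i • x i‖ / Real.sqrt (∑' i, ω i * ‖x i‖ ^ 2) } := by
  have eq_sSup_sphere :
      friedrichsCos ω M = sSup (sumNormsOnSphere ω fun i => M i ⊓ (⨅ j, M j)ᗮ) :=
    (friedrichsCos_eq_sSup_sumNormsOnBall hω hωsum M).trans
      (sSup_sumNormsOnBall_eq_sSup_sumNormsOnSphere hω (sumNormsOnSphere_nonempty hj))
  exact ⟨eq_sSup_sphere,
    eq_sSup_sphere.trans (congrArg sSup (sumNormsOnSphere_eq_sumNormQuotients ω _))⟩

/-- If some `Mⱼ ≠ M`, then the Friedrichs cosine admits the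
alternative expressions as suprema of norms of weighted averages. -/
theorem stmt_7 {H : Type*} [NormedAddCommGroup H] [InnerProductSpace ℝ H] [CompleteSpace H]
    {ι : Type*} [Countable ι] [Nonempty ι]
    (ω : ι → ℝ) (hω : ∀ i, 0 < ω i) (hωsum : HasSum ω 1)
    (M : ι → Submodule ℝ H) [∀ i, CompleteSpace (M i)]
    (hMnt : ∀ i, M i ≠ ⊥)
    (hj : ∃ j, M j ≠ ⨅ i, M i) :
    friedrichsCos ω M =
      sSup { r : ℝ | ∃ x : ι → H,
        (∀ i, x i ∈ M i ⊓ (⨅ j, M j : Submodule ℝ H)ᗮ) ∧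
        (Summable fun i => ω i * ‖x i‖ ^ 2) ∧ (∑' i, ω i * ‖x i‖ ^ 2) = 1 ∧
        r = ‖∑' i, ω i • x i‖ } ∧
    friedrichsCos ω M =
      sSup { r : ℝ | ∃ x : ι → H,
        (∀ i, x i ∈ M i ⊓ (⨅ j, M j : Submodule ℝ H)ᗮ) ∧
        (Summable fun i => ω i * ‖x i‖ ^ 2) ∧ 0 < (∑' i, ω i * ‖x i‖ ^ 2) ∧
        r = ‖∑' i, ω i • x i‖ / Real.sqrt (∑' i, ω i * ‖x i‖ ^ 2) } := by
  have := completeSpace_iInf_submodule M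
  exact stmt_7_general ω (fun i => (hω i).le) hωsum.summable M <| hj.imp fun j hMj =>
    ⟨hω j, inf_orthogonal_ne_bot_of_lt ((iInf_le M j).lt_of_ne hMj.symm)⟩
end

section
/- Fix the subspaces (Mᵢ)_{i∈ι}. The following are equivalent: (i) there exists a weight family λ : ι → ℝ (λ i > 0 for all i, ∑ᵢ λ i = 1) such that the Friedrichs cosine c_λ equals 1; (ii) for every weight family ω : ι → ℝ (ω i > 0 for all i, ∑ᵢ ω i = 1), the Friedrichs cosine c_ω equals 1. -/
open RealInnerProductSpace

/-!
The condition `c_ω = 1` is equivalent to one that does not mention `ω`: every finite subfamily of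
the subspaces `Mᵢ ∩ Mᗮ` comes arbitrarily close to a common unit vector of `Mᗮ`.

For a unit vector `y`, `∑ ωᵢ ‖xᵢ - y‖² = ∑ ωᵢ ‖xᵢ‖² - 2 ∑ ωᵢ ⟪xᵢ, y⟫ + 1 ≤ 2 (1 - ∑ ωᵢ ⟪xᵢ, y⟫)`,
so a nearly optimal pair `(x, y)` has each `‖xᵢ - y‖` small, at a rate depending on `ωᵢ`.
Conversely, a finite set of indices carries almost all the mass of `ω`, so approximants in those
subspaces, shrunk into the unit ball and extended by zero, give a nearly optimal pair.
-/

open Filter Topology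

section WeightedSums

variable {H : Type*} [NormedAddCommGroup H] [InnerProductSpace ℝ H] {ι : Type*}
  {ω : ι → ℝ} {x : ι → H}

lemma summable_mul_inner (hω : ∀ i, 0 ≤ ω i) (hsum : Summable ω)
    (hx : Summable fun i => ω i * ‖x i‖ ^ 2) (y : H) :
    Summable fun i => ω i * ⟪x i, y⟫ := by
  refine .of_norm_bounded (hx.add (hsum.mul_right (‖y‖ ^ 2))) fun i => ?_
  have inner_le : ‖⟪x i, y⟫‖ ≤ ‖x i‖ ^ 2 + ‖y‖ ^ 2 := by
    nlinarith [norm_inner_le_norm (𝕜 := ℝ) (x i) y, sq_nonneg (‖x i‖ - ‖y‖)]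
  rw [norm_mul, Real.norm_of_nonneg (hω i), ← mul_add]
  exact mul_le_mul_of_nonneg_left inner_le (hω i)

lemma hasSum_mul_norm_sub_sq {c : ℝ} (hω : ∀ i, 0 ≤ ω i) (hsum : HasSum ω c)
    (hx : Summable fun i => ω i * ‖x i‖ ^ 2) (y : H) :
    HasSum (fun i => ω i * ‖x i - y‖ ^ 2)
      (∑' i, ω i * ‖x i‖ ^ 2 - 2 * ∑' i, ω i * ⟪x i, y⟫ + c * ‖y‖ ^ 2) := by
  have hinner := (summable_mul_inner hω hsum.summable hx y).hasSum
  refine ((hx.hasSum.sub (hinner.mul_left 2)).add (hsum.mul_right (‖y‖ ^ 2))).congr_fun fun i => ?_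
  rw [norm_sub_sq_real]
  ring

end WeightedSums

lemma exists_pos_hasSum_one (ι : Type*) [Countable ι] [Nonempty ι] :
    ∃ ω : ι → ℝ, (∀ i, 0 < ω i) ∧ HasSum ω 1 := by
  have := Encodable.ofCountable ι
  obtain ⟨w, hw, c, hc, -⟩ := posSumOfEncodable one_pos ι
  have hc0 : 0 < c := hc.tsum_eq ▸
    hc.summable.tsum_pos (fun i => (hw i).le) (Classical.arbitrary ι) (hw _)
  refine ⟨fun i => w i / c, fun i => div_pos (hw i) hc0, ?_⟩
  simpa only [div_self hc0.ne'] using hc.div_const c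

section Pairings

variable {H : Type*} [NormedAddCommGroup H] [InnerProductSpace ℝ H] {ι : Type*}
  {ω : ι → ℝ} {K : Submodule ℝ H} {N : ι → Submodule ℝ H}

/-- The inner products of the vectors in the unit ball of `∏ᵢ Nᵢ` with the constant families `y`,
`y` in the unit ball of `K`, in the `ω`-weighted `ℓ²` product space. The Friedrichs cosine is the
supremum of this set for `K = Mᗮ` and `Nᵢ = Mᵢ ∩ Mᗮ`. -/
def weightedPairings (ω : ι → ℝ) (K : Submodule ℝ H) (N : ι → Submodule ℝ H) : Set ℝ :=
  {r | ∃ (x : ι → H) (y : H), (∀ i, x i ∈ N i) ∧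
    (Summable fun i => ω i * ‖x i‖ ^ 2) ∧ (∑' i, ω i * ‖x i‖ ^ 2) ≤ 1 ∧
    y ∈ K ∧ ‖y‖ ≤ 1 ∧ r = ∑' i, ω i * ⟪x i, y⟫}

/-- Every finite subfamily of `N` has points arbitrarily close to a common unit vector of `K`; the
vector may depend on the subfamily and on the required precision. -/
def HasApproxCommonUnitVectors (K : Submodule ℝ H) (N : ι → Submodule ℝ H) : Prop :=
  ∀ (F : Finset ι) (ε : ℝ), 0 < ε →
    ∃ y ∈ K, ‖y‖ = 1 ∧ ∀ i ∈ F, ∃ x ∈ N i, ‖x - y‖ < ε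

lemma sum_mul_inner_mem_weightedPairings {F : Finset ι} {u : ι → H} {y : H}
    (hω : ∀ i, 0 ≤ ω i) (hF : ∑ i ∈ F, ω i ≤ 1) (hu : ∀ i ∈ F, u i ∈ N i)
    (hu1 : ∀ i ∈ F, ‖u i‖ ≤ 1) (hy : y ∈ K) (hy1 : ‖y‖ ≤ 1) :
    ∑ i ∈ F, ω i * ⟪u i, y⟫ ∈ weightedPairings ω K N := by
  classical
  let x : ι → H := fun i => if i ∈ F then u i else 0
  have hxF : ∀ i ∈ F, x i = u i := fun i hi => if_pos hi
  have hx0 : ∀ i ∉ F, x i = 0 := fun i hi => if_neg hi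
  have hnorm0 : ∀ i ∉ F, ω i * ‖x i‖ ^ 2 = 0 := fun i hi => by simp [hx0 i hi]
  have hinner0 : ∀ i ∉ F, ω i * ⟪x i, y⟫ = 0 := fun i hi => by simp [hx0 i hi]
  refine ⟨x, y, fun i => ?_, summable_of_ne_finset_zero hnorm0, ?_, hy, hy1, ?_⟩
  · by_cases hi : i ∈ F
    · exact hxF i hi ▸ hu i hi
    · exact hx0 i hi ▸ (N i).zero_mem
  · rw [tsum_eq_sum hnorm0]
    refine (Finset.sum_le_sum fun i hi => ?_).trans hF
    rw [hxF i hi]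
    exact mul_le_of_le_one_right (hω i) (pow_le_one₀ (norm_nonneg _) (hu1 i hi))
  · rw [tsum_eq_sum hinner0]
    exact Finset.sum_congr rfl fun i hi => by rw [hxF i hi]

lemma weightedPairings_nonempty (ω : ι → ℝ) (K : Submodule ℝ H) (N : ι → Submodule ℝ H) :
    (weightedPairings ω K N).Nonempty :=
  ⟨0, 0, 0, fun i => (N i).zero_mem, by simp [summable_zero], by simp, K.zero_mem, by simp, by simp⟩

lemma one_mem_upperBounds_weightedPairings (hω : ∀ i, 0 ≤ ω i) (hsum : HasSum ω 1) :
    1 ∈ upperBounds (weightedPairings ω K N) := by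
  rintro _ ⟨x, y, -, hx, hx1, -, hy1, rfl⟩
  have hnonneg := (hasSum_mul_norm_sub_sq hω hsum hx y).nonneg
    fun i => mul_nonneg (hω i) (sq_nonneg _)
  have hy_sq : ‖y‖ ^ 2 ≤ 1 := pow_le_one₀ (norm_nonneg y) hy1
  linarith

lemma exists_norm_eq_one_mul_norm_sub_sq_le_of_mem_weightedPairings {r : ℝ} (hω : ∀ i, 0 ≤ ω i)
    (hsum : HasSum ω 1) (hr : 0 < r) (hmem : r ∈ weightedPairings ω K N) :
    ∃ x : ι → H, ∃ y ∈ K, (∀ i, x i ∈ N i) ∧ ‖y‖ = 1 ∧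
      ∀ i, ω i * ‖x i - y‖ ^ 2 ≤ 2 * (1 - r) := by
  obtain ⟨x, y, hxN, hx, hx1, hyK, hy1, rfl⟩ := hmem
  have hy0 : y ≠ 0 := by
    rintro rfl
    simp at hr
  have hnorm : ‖‖y‖⁻¹ • y‖ = 1 := norm_smul_inv_norm (𝕜 := ℝ) hy0
  refine ⟨x, ‖y‖⁻¹ • y, K.smul_mem _ hyK, hxN, hnorm, fun i => ?_⟩
  have pairing_le : ∑' i, ω i * ⟪x i, y⟫ ≤ ∑' i, ω i * ⟪x i, ‖y‖⁻¹ • y⟫ := by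
    simp only [real_inner_smul_right, mul_left_comm _ ‖y‖⁻¹, tsum_mul_left]
    exact le_mul_of_one_le_left hr.le ((one_le_inv₀ (norm_pos_iff.2 hy0)).2 hy1)
  have term_le := le_hasSum (hasSum_mul_norm_sub_sq hω hsum hx (‖y‖⁻¹ • y)) i
    fun j _ => mul_nonneg (hω j) (sq_nonneg _)
  rw [hnorm] at term_le
  linarith

lemma hasApproxCommonUnitVectors_of_isLUB_weightedPairings (hω : ∀ i, 0 < ω i)
    (hsum : HasSum ω 1) (hlub : IsLUB (weightedPairings ω K N) 1) :
    HasApproxCommonUnitVectors K N := by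
  intro F ε hε
  have hsmall : ∀ᶠ r : ℝ in 𝓝 1, ∀ i ∈ F, 2 * (1 - r) < ω i * ε ^ 2 := by
    refine (eventually_all_finset F).2 fun i _ => ?_
    have htendsto : Tendsto (fun r : ℝ => 2 * (1 - r)) (𝓝 1) (𝓝 0) :=
      Continuous.tendsto' (by fun_prop) _ _ (by norm_num)
    exact htendsto.eventually_lt_const (mul_pos (hω i) (pow_pos hε 2))
  have hfrequently : ∃ᶠ r in 𝓝 1, r ∈ weightedPairings ω K N :=
    (hlub.frequently_mem (weightedPairings_nonempty ω K N)).filter_mono nhdsWithin_le_nhds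
  obtain ⟨r, hmem, hr0, hr⟩ :=
    (hfrequently.and_eventually ((lt_mem_nhds one_pos).and hsmall)).exists
  obtain ⟨x, y, hyK, hxN, hy1, hxy⟩ :=
    exists_norm_eq_one_mul_norm_sub_sq_le_of_mem_weightedPairings (fun i => (hω i).le) hsum hr0 hmem
  refine ⟨y, hyK, hy1, fun i hi => ⟨x i, hxN i, ?_⟩⟩
  have hsq : ‖x i - y‖ ^ 2 < ε ^ 2 :=
    lt_of_mul_lt_mul_left ((hxy i).trans_lt (hr i hi)) (hω i).le
  exact lt_of_pow_lt_pow_left₀ 2 hε.le hsq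

lemma exists_norm_le_one_lt_inner {L : Submodule ℝ H} {x y : H} {ε : ℝ} (hx : x ∈ L)
    (hy : ‖y‖ = 1) (hxy : ‖x - y‖ < ε) :
    ∃ u ∈ L, ‖u‖ ≤ 1 ∧ 1 - 2 * ε < ⟪u, y⟫ := by
  have hε : 0 < ε := (norm_nonneg _).trans_lt hxy
  have norm_x_le : ‖x‖ ≤ 1 + ε := by linarith [norm_le_norm_add_norm_sub' x y]
  have lt_inner : 1 - ε < ⟪x, y⟫ := by
    have hsub : ⟪x - y, y⟫ = ⟪x, y⟫ - 1 := by
      rw [inner_sub_left, real_inner_self_eq_norm_sq, hy, one_pow]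
    have hcs := (abs_le.1 (abs_real_inner_le_norm (x - y) y)).1
    rw [hy, hsub] at hcs
    linarith
  refine ⟨(1 + ε)⁻¹ • x, L.smul_mem _ hx, ?_, ?_⟩
  · rw [norm_smul, norm_inv, Real.norm_of_nonneg (by positivity)]
    exact inv_mul_le_one_of_le₀ norm_x_le (by positivity)
  · rw [real_inner_smul_left, lt_inv_mul_iff₀ (by positivity)]
    nlinarith

lemma HasApproxCommonUnitVectors.isLUB_weightedPairings (h : HasApproxCommonUnitVectors K N)
    (hω : ∀ i, 0 ≤ ω i) (hsum : HasSum ω 1) : IsLUB (weightedPairings ω K N) 1 := by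
  refine ⟨one_mem_upperBounds_weightedPairings hω hsum, fun b hb => ?_⟩
  refine le_of_forall_pos_le_add fun δ hδ => ?_
  obtain ⟨F, hF⟩ := (hsum.eventually_const_lt (sub_lt_self 1 (by positivity : 0 < δ / 3))).exists
  have hF1 : ∑ i ∈ F, ω i ≤ 1 := sum_le_hasSum F (fun i _ => hω i) hsum
  obtain ⟨y, hyK, hy1, happrox⟩ := h F (δ / 3) (by positivity)
  have hball : ∀ i ∈ F, ∃ u ∈ N i, ‖u‖ ≤ 1 ∧ 1 - 2 * (δ / 3) < ⟪u, y⟫ := fun i hi =>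
    let ⟨_, hx, hxy⟩ := happrox i hi
    exists_norm_le_one_lt_inner hx hy1 hxy
  choose! u huN hu1 hu using hball
  calc 1 ≤ (∑ i ∈ F, ω i) * (1 - 2 * (δ / 3)) + δ := by nlinarith
    _ ≤ ∑ i ∈ F, ω i * ⟪u i, y⟫ + δ := by
      rw [Finset.sum_mul]
      gcongr with i hi
      · exact hω i
      · exact (hu i hi).le
    _ ≤ b + δ := by
      gcongr
      exact hb (sum_mul_inner_mem_weightedPairings hω hF1 huN hu1 hyK hy1.le)

end Pairings

lemma friedrichsCos_eq_one_iff {H : Type*} [NormedAddCommGroup H] [InnerProductSpace ℝ H]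
    {ι : Type*} {ω : ι → ℝ} (hω : ∀ i, 0 < ω i) (hsum : HasSum ω 1) (M : ι → Submodule ℝ H) :
    friedrichsCos ω M = 1 ↔
      HasApproxCommonUnitVectors (⨅ j, M j)ᗮ fun i => M i ⊓ (⨅ j, M j)ᗮ := by
  have hω' : ∀ i, 0 ≤ ω i := fun i => (hω i).le
  constructor
  · intro hcos
    have hlub := isLUB_csSup (weightedPairings_nonempty ω (⨅ j, M j)ᗮ fun i => M i ⊓ (⨅ j, M j)ᗮ)
      ⟨1, one_mem_upperBounds_weightedPairings hω' hsum⟩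
    exact hasApproxCommonUnitVectors_of_isLUB_weightedPairings hω hsum (hcos ▸ hlub)
  · intro h
    exact (h.isLUB_weightedPairings hω' hsum).csSup_eq (weightedPairings_nonempty _ _ _)

theorem stmt_11_general {H : Type*} [NormedAddCommGroup H] [InnerProductSpace ℝ H]
    {ι : Type*} [Countable ι] [Nonempty ι] (M : ι → Submodule ℝ H) :
    (∃ lam : ι → ℝ, (∀ i, 0 < lam i) ∧ HasSum lam 1 ∧ friedrichsCos lam M = 1) ↔
    (∀ ω : ι → ℝ, (∀ i, 0 < ω i) → HasSum ω 1 → friedrichsCos ω M = 1) := by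
  constructor
  · rintro ⟨lam, hlam, hlam_sum, hcos⟩ ω hω hω_sum
    exact (friedrichsCos_eq_one_iff hω hω_sum M).2
      ((friedrichsCos_eq_one_iff hlam hlam_sum M).1 hcos)
  · intro h
    obtain ⟨ω, hω, hω_sum⟩ := exists_pos_hasSum_one ι
    exact ⟨ω, hω, hω_sum, h ω hω hω_sum⟩

/-- there exists a weight family `λ` with `c_λ = 1` if and only if
`c_ω = 1` for every weight family `ω`. -/
theorem stmt_11 {H : Type*} [NormedAddCommGroup H] [InnerProductSpace ℝ H] [CompleteSpace H]
    {ι : Type*} [Countable ι] [Nonempty ι]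
    (M : ι → Submodule ℝ H) [∀ i, CompleteSpace (M i)]
    (hMnt : ∀ i, M i ≠ ⊥) :
    (∃ lam : ι → ℝ, (∀ i, 0 < lam i) ∧ HasSum lam 1 ∧ friedrichsCos lam M = 1) ↔
    (∀ ω : ι → ℝ, (∀ i, 0 < ω i) → HasSum ω 1 → friedrichsCos ω M = 1) :=
  stmt_11_general M
end
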